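/- arXiv:2512.17295 — 4 statements merged into one kernel-verified Lean document; each statement's English description precedes it below -/
import Mathlib

section
/- Additive error of SpaceSaving: if the SpaceSaving algorithm with capacity k (and most-recent-eviction tie-breaking) processes a stream of length T, then every item i that is tracked at the end of the stream satisfies f_i ≤ Ĉ_i ≤ f_i + T/k, where Ĉ_i is its terminal counter value and f_i is its true frequency in the stream. -/
/-- State of the SpaceSaving algorithm: tracked set, counters (0 for untracked
items), and recency (last occurrence time, 0 if never seen). -/
structure SSState (α : Type) where
  tracked : Finset α
  count : α → ℕ
  recency : α → ℕ

variable {α : Type} [LinearOrder α]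

/-- The set of tracked items of minimum counter value. -/
def ssMinSet (s : SSState α) : Finset α :=
  s.tracked.filter (fun a => ∀ b ∈ s.tracked, s.count a ≤ s.count b)

/-- The eviction victim: among tracked items of minimum counter value, the one
with the largest recency (ties in recency broken by the order on `α`). -/
def ssEvict (s : SSState α) : Option α :=
  if h : ((ssMinSet s).filter (fun a => ∀ b ∈ ssMinSet s, s.recency b ≤ s.recency a)).Nonempty
  then some (((ssMinSet s).filter (fun a => ∀ b ∈ ssMinSet s, s.recency b ≤ s.recency a)).max' h)
  else none

/-- One step of SpaceSaving with capacity `k` at time `t`; a `none` update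
contributes nothing. -/
def ssStep (k t : ℕ) (s : SSState α) : Option α → SSState α
  | none => s
  | some x =>
    if x ∈ s.tracked then
      ⟨s.tracked, Function.update s.count x (s.count x + 1), Function.update s.recency x t⟩
    else if s.tracked.card < k then
      ⟨insert x s.tracked, Function.update s.count x 1, Function.update s.recency x t⟩
    else
      match ssEvict s with
      | none => s
      | some y =>
        ⟨insert x (s.tracked.erase y),
         Function.update (Function.update s.count y 0) x (s.count y + 1),
         Function.update s.recency x t⟩

def ssRunAux (k : ℕ) : SSState α → ℕ → List (Option α) → SSState α
  | s, _, [] => s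
  | s, t, x :: xs => ssRunAux k (ssStep k t s x) (t + 1) xs

/-- Run SpaceSaving with capacity `k` on a stream (positions are 1-indexed). -/
def ssRun (k : ℕ) (X : List (Option α)) : SSState α :=
  ssRunAux k ⟨∅, fun _ => 0, fun _ => 0⟩ 1 X

/-!
While there is room, every counter is exact, so counters can only err after evictions. Let `m` be
`0` until the first eviction and afterwards the counter of the last evicted item. An evicted item
has minimum counter, so `m` never exceeds a counter. An untracked item therefore has frequency at
most `m`, and restarting it at `m + 1` overestimates it by at most `m`. Every arrival raises the sum
of the counters by exactly one, so once all `k` counters are in use, `k * m` is at most the length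
of the stream.
-/

section SumUpdate

variable {ι M : Type*} [DecidableEq ι] [AddCommMonoid M]

theorem sum_update_add_of_mem {s : Finset ι} {i : ι} (hi : i ∈ s) (f : ι → M) (b : M) :
    ∑ j ∈ s, Function.update f i (f i + b) j = ∑ j ∈ s, f j + b := by
  rw [Finset.sum_update_of_mem hi, Finset.sdiff_singleton_eq_erase, add_right_comm,
    Finset.add_sum_erase _ _ hi]

theorem sum_insert_update_of_notMem {s : Finset ι} {i : ι} (hi : i ∉ s) (f : ι → M) (b : M) :
    ∑ j ∈ insert i s, Function.update f i b j = ∑ j ∈ s, f j + b := by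
  rw [Finset.sum_insert hi, Finset.sum_update_of_notMem hi, Function.update_self, add_comm]

end SumUpdate

theorem count_reduceOption {β : Type*} [DecidableEq β] (X : List (Option β)) (a : β) :
    X.reduceOption.count a = X.count (some a) := by
  induction X with
  | nil => rfl
  | cons o X ih => cases o <;> simp [List.count_cons, ih]

/-- The number `m` is a uniform error bound for the counters of `s` as estimates of the frequencies
in the processed stream `L`. It also stays below every tracked counter, so that evicting an item of
minimum counter can only raise it. -/
structure SSErrorBound {β : Type} [DecidableEq β] (L : List β) (s : SSState β) (m : ℕ) :
    Prop where
  le_count : ∀ a ∈ s.tracked, m ≤ s.count a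
  freq_le_count : ∀ a ∈ s.tracked, L.count a ≤ s.count a
  count_le_freq_add : ∀ a ∈ s.tracked, s.count a ≤ L.count a + m
  freq_le_of_notMem : ∀ a ∉ s.tracked, L.count a ≤ m

namespace SSErrorBound

variable {β : Type} [DecidableEq β] {L : List β} {s : SSState β} {m : ℕ} {x y : β}

theorem increment (h : SSErrorBound L s m) (hx : x ∈ s.tracked) (r : β → ℕ) :
    SSErrorBound (L ++ [x]) ⟨s.tracked, Function.update s.count x (s.count x + 1), r⟩ m where
  le_count a ha := by
    have := h.le_count a ha
    rcases eq_or_ne a x with rfl | hax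
    · simpa using this.trans (Nat.le_succ _)
    · simpa [hax] using this
  freq_le_count a ha := by
    have := h.freq_le_count a ha
    rcases eq_or_ne a x with rfl | hax
    · simpa using this
    · simpa [hax, hax.symm] using this
  count_le_freq_add a ha := by
    have := h.count_le_freq_add a ha
    rcases eq_or_ne a x with rfl | hax
    · simpa [add_right_comm] using this
    · simpa [hax, hax.symm] using this
  freq_le_of_notMem a ha := by
    have hxa : x ≠ a := ne_of_mem_of_not_mem hx ha
    simpa [hxa] using h.freq_le_of_notMem a ha

theorem insert_of_notMem (h : SSErrorBound L s m) (hx : x ∉ s.tracked) (r : β → ℕ) :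
    SSErrorBound (L ++ [x]) ⟨insert x s.tracked, Function.update s.count x (m + 1), r⟩ m where
  le_count a ha := by
    rcases eq_or_ne a x with rfl | hax
    · simp
    · simpa [hax] using h.le_count a (Finset.mem_of_mem_insert_of_ne ha hax)
  freq_le_count a ha := by
    rcases eq_or_ne a x with rfl | hax
    · simpa using h.freq_le_of_notMem a hx
    · simpa [hax, hax.symm] using h.freq_le_count a (Finset.mem_of_mem_insert_of_ne ha hax)
  count_le_freq_add a ha := by
    rcases eq_or_ne a x with rfl | hax
    · simp only [Function.update_self, List.count_append, List.count_singleton_self]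
      omega
    · simpa [hax, hax.symm] using
        h.count_le_freq_add a (Finset.mem_of_mem_insert_of_ne ha hax)
  freq_le_of_notMem a ha := by
    obtain ⟨hax, ha⟩ : a ≠ x ∧ a ∉ s.tracked := by simpa using ha
    simpa [hax.symm] using h.freq_le_of_notMem a ha

theorem evict (h : SSErrorBound L s m) (hy : y ∈ s.tracked)
    (hmin : ∀ b ∈ s.tracked, s.count y ≤ s.count b) (r : β → ℕ) :
    SSErrorBound L ⟨s.tracked.erase y, Function.update s.count y 0, r⟩ (s.count y) where
  le_count a ha := by
    obtain ⟨hay, ha⟩ := Finset.mem_erase.1 ha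
    simpa [hay] using hmin a ha
  freq_le_count a ha := by
    obtain ⟨hay, ha⟩ := Finset.mem_erase.1 ha
    simpa [hay] using h.freq_le_count a ha
  count_le_freq_add a ha := by
    obtain ⟨hay, ha⟩ := Finset.mem_erase.1 ha
    simpa [hay] using (h.count_le_freq_add a ha).trans
      (Nat.add_le_add_left (h.le_count y hy) _)
  freq_le_of_notMem a ha := by
    rcases eq_or_ne a y with rfl | hay
    · exact h.freq_le_count a hy
    · have ha : a ∉ s.tracked := fun hmem => ha (Finset.mem_erase.2 ⟨hay, hmem⟩)
      exact (h.freq_le_of_notMem a ha).trans (h.le_count y hy)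

end SSErrorBound

/-- The invariant of SpaceSaving with capacity `k` after processing the stream `L`: the counters
have error bound `m`, which is zero while there is room, and they add up to the length of `L`. -/
structure SSInvariant {β : Type} [DecidableEq β] (k : ℕ) (L : List β) (s : SSState β) (m : ℕ) :
    Prop extends SSErrorBound L s m where
  card_le : s.tracked.card ≤ k
  eq_zero_of_card_lt : s.tracked.card < k → m = 0
  sum_count : ∑ a ∈ s.tracked, s.count a = L.length

namespace SSInvariant

variable {β : Type} [DecidableEq β] {k : ℕ} {L : List β} {s : SSState β} {m : ℕ} {x y : β}

theorem empty (k : ℕ) (r : β → ℕ) : SSInvariant k [] ⟨∅, fun _ => 0, r⟩ 0 := by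
  constructor
  · constructor <;> simp
  all_goals simp

theorem mul_le_length (h : SSInvariant k L s m) : k * m ≤ L.length := by
  rcases h.card_le.lt_or_eq with hlt | heq
  · simp [h.eq_zero_of_card_lt hlt]
  · calc
      k * m = s.tracked.card • m := by rw [heq, smul_eq_mul]
      _ ≤ ∑ a ∈ s.tracked, s.count a := Finset.card_nsmul_le_sum _ _ _ h.le_count
      _ = L.length := h.sum_count

theorem increment (h : SSInvariant k L s m) (hx : x ∈ s.tracked) (r : β → ℕ) :
    SSInvariant k (L ++ [x]) ⟨s.tracked, Function.update s.count x (s.count x + 1), r⟩ m where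
  toSSErrorBound := h.toSSErrorBound.increment hx r
  card_le := h.card_le
  eq_zero_of_card_lt := h.eq_zero_of_card_lt
  sum_count := by
    rw [sum_update_add_of_mem hx, h.sum_count, List.length_append, List.length_singleton]

theorem insert_of_card_lt (h : SSInvariant k L s m) (hx : x ∉ s.tracked)
    (hcard : s.tracked.card < k) (r : β → ℕ) :
    SSInvariant k (L ++ [x]) ⟨insert x s.tracked, Function.update s.count x 1, r⟩ 0 where
  toSSErrorBound := (h.eq_zero_of_card_lt hcard ▸ h.toSSErrorBound).insert_of_notMem hx r
  card_le := (Finset.card_insert_le _ _).trans hcard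
  eq_zero_of_card_lt _ := rfl
  sum_count := by
    rw [sum_insert_update_of_notMem hx, h.sum_count, List.length_append, List.length_singleton]

theorem replace (h : SSInvariant k L s m) (hx : x ∉ s.tracked) (hcard : k ≤ s.tracked.card)
    (hy : y ∈ s.tracked) (hmin : ∀ b ∈ s.tracked, s.count y ≤ s.count b) (r : β → ℕ) :
    SSInvariant k (L ++ [x])
      ⟨insert x (s.tracked.erase y),
        Function.update (Function.update s.count y 0) x (s.count y + 1), r⟩ (s.count y) := by
  have hx' : x ∉ s.tracked.erase y := fun hmem => hx (Finset.mem_of_mem_erase hmem)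
  have hcard' : (insert x (s.tracked.erase y)).card = k := by
    rw [Finset.card_insert_of_notMem hx', Finset.card_erase_add_one hy]
    exact h.card_le.antisymm hcard
  exact {
    toSSErrorBound := (h.toSSErrorBound.evict hy hmin r).insert_of_notMem hx' r
    card_le := hcard'.le
    eq_zero_of_card_lt := fun hlt => absurd hcard' hlt.ne
    sum_count := by
      rw [sum_insert_update_of_notMem hx',
        Finset.sum_update_of_notMem (Finset.notMem_erase y s.tracked), ← add_assoc,
        Finset.sum_erase_add _ _ hy, h.sum_count, List.length_append, List.length_singleton] }

end SSInvariant

theorem mem_ssMinSet {β : Type} {s : SSState β} {a : β} :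
    a ∈ ssMinSet s ↔ a ∈ s.tracked ∧ ∀ b ∈ s.tracked, s.count a ≤ s.count b :=
  Finset.mem_filter

theorem ssMinSet_nonempty {β : Type} {s : SSState β} (hs : s.tracked.Nonempty) :
    (ssMinSet s).Nonempty := by
  obtain ⟨a, ha, hmin⟩ := s.tracked.exists_min_image s.count hs
  exact ⟨a, mem_ssMinSet.2 ⟨ha, hmin⟩⟩

theorem exists_mem_ssMinSet_ssEvict_eq_some {s : SSState α} (hs : s.tracked.Nonempty) :
    ∃ y ∈ ssMinSet s, ssEvict s = some y := by
  have hne : ((ssMinSet s).filter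
      (fun a => ∀ b ∈ ssMinSet s, s.recency b ≤ s.recency a)).Nonempty := by
    obtain ⟨a, ha, hmax⟩ := (ssMinSet s).exists_max_image s.recency (ssMinSet_nonempty hs)
    exact ⟨a, Finset.mem_filter.2 ⟨ha, hmax⟩⟩
  exact ⟨_, (Finset.mem_filter.1 (Finset.max'_mem _ hne)).1, dif_pos hne⟩

namespace SSInvariant

variable {k : ℕ} {L : List α} {s : SSState α} {m : ℕ}

theorem exists_ssStep (h : SSInvariant k L s m) (hk : 1 ≤ k) (t : ℕ) (x : α) :
    ∃ m', SSInvariant k (L ++ [x]) (ssStep k t s (some x)) m' := by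
  by_cases hx : x ∈ s.tracked
  · exact ⟨m, by simpa only [ssStep, if_pos hx] using h.increment hx _⟩
  by_cases hcard : s.tracked.card < k
  · exact ⟨0, by
      simpa only [ssStep, if_neg hx, if_pos hcard] using
        h.insert_of_card_lt hx hcard _⟩
  rw [not_lt] at hcard
  obtain ⟨y, hy, hevict⟩ :=
    exists_mem_ssMinSet_ssEvict_eq_some (Finset.card_pos.1 (hk.trans hcard))
  obtain ⟨hy, hmin⟩ := mem_ssMinSet.1 hy
  exact ⟨s.count y, by
    simpa only [ssStep, if_neg hx, if_neg hcard.not_gt, hevict] using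
      h.replace hx hcard hy hmin _⟩

theorem exists_ssRunAux (h : SSInvariant k L s m) (hk : 1 ≤ k) (t : ℕ) (X : List (Option α)) :
    ∃ m', SSInvariant k (L ++ X.reduceOption) (ssRunAux k s t X) m' := by
  induction X generalizing L s m t with
  | nil => exact ⟨m, by simpa [ssRunAux] using h⟩
  | cons o X ih =>
    cases o with
    | none => exact ih h (t + 1)
    | some x =>
      obtain ⟨m', h'⟩ := h.exists_ssStep hk t x
      simpa [ssRunAux] using ih h' (t + 1)

theorem exists_ssRun (hk : 1 ≤ k) (X : List (Option α)) :
    ∃ m, SSInvariant k X.reduceOption (ssRun k X) m :=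
  (empty k fun _ => 0).exists_ssRunAux hk 1 X

end SSInvariant

theorem spaceSaving_additive_error_general (k : ℕ) (hk : 1 ≤ k) (X : List (Option α)) :
    ∀ i ∈ (ssRun k X).tracked,
      X.count (some i) ≤ (ssRun k X).count i ∧
      ((ssRun k X).count i : ℝ) ≤
        (X.count (some i) : ℝ) + (X.reduceOption.length : ℝ) / (k : ℝ) := by
  intro i hi
  obtain ⟨m, h⟩ := SSInvariant.exists_ssRun hk X
  have hm : (m : ℝ) ≤ (X.reduceOption.length : ℝ) / k := by
    rw [le_div_iff₀' (by exact_mod_cast hk)]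
    exact_mod_cast h.mul_le_length
  rw [← count_reduceOption]
  refine ⟨h.freq_le_count i hi, ?_⟩
  calc
    ((ssRun k X).count i : ℝ) ≤ X.reduceOption.count i + m := by
      exact_mod_cast h.count_le_freq_add i hi
    _ ≤ X.reduceOption.count i + (X.reduceOption.length : ℝ) / k := by gcongr

/-- **Additive error of SpaceSaving.**  If SpaceSaving with capacity `k` (and
most-recent-eviction tie-breaking) processes a stream `X` of length `T`, then
every item `i` tracked at the end of the stream satisfies
`f_i ≤ Ĉ_i ≤ f_i + T / k`, where `Ĉ_i` is its terminal counter value and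
`f_i` its true frequency in the stream. -/
theorem spaceSaving_additive_error {α : Type} [LinearOrder α] (k : ℕ) (hk : 1 ≤ k)
    (X : List α) :
    ∀ i ∈ (ssRun k (X.map some)).tracked,
      X.count i ≤ (ssRun k (X.map some)).count i ∧
      ((ssRun k (X.map some)).count i : ℝ) ≤ (X.count i : ℝ) + (X.length : ℝ) / (k : ℝ) := by
  simpa [← count_reduceOption, List.reduceOption, List.filterMap_map] using
    spaceSaving_additive_error_general k hk (X.map some)
end

section
/- For the parallel runs of SpaceSaving on neighboring streams, for every time t ≥ i and every item a tracked in both runs (a ∈ T_t ∩ T'_t), if the counters agree, C_t[a] = C'_t[a], then the recencies agree as well: τ_t[a] = τ'_t[a]. -/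
variable {α : Type} [LinearOrder α]

section NeighborStates

variable {α : Type} [LinearOrder α]

/-- State (S1) of the pair of SpaceSaving data structures on neighboring streams:
(a) the tracked sets coincide; (b) there is `y ∈ T` with `C[y] = C'[y] + 1`;
(c) all other tracked counters coincide. -/
def StateS1 (s s' : SSState α) : Prop :=
  s.tracked = s'.tracked ∧
  ∃ y ∈ s.tracked, s.count y = s'.count y + 1 ∧
    ∀ z ∈ s.tracked, z ≠ y → s.count z = s'.count z

/-- State (S2): (a) `T ≠ T'` with `T \ T' = {z}` and `T' \ T = {z'}`;
(b) counters agree on `T ∩ T'`; (c) `C[z] = C'[z'] + 1`, `z'` attains the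
minimum counter in `T'`, and `C[z] ≤ min_{a ∈ T} C[a] + 1`. -/
def StateS2 (s s' : SSState α) : Prop :=
  s.tracked ≠ s'.tracked ∧
  ∃ z z' : α,
    s.tracked \ s'.tracked = {z} ∧ s'.tracked \ s.tracked = {z'} ∧
    (∀ a ∈ s.tracked ∩ s'.tracked, s.count a = s'.count a) ∧
    s.count z = s'.count z' + 1 ∧
    (∀ a ∈ s'.tracked, s'.count z' ≤ s'.count a) ∧
    (∀ a ∈ s.tracked, s.count z ≤ s.count a + 1)

/-- State (S3): (a) `T ≠ T'` with `T \ T' = {z}` and `T' \ T = {z'}`;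
(b) there is `y ∈ T ∩ T'` with `C[y] = C'[y] + 1` and the counters agree on the
rest of the intersection; (c) `C[z] = C'[z']` and both attain the minimum
counter value of their respective tracked sets. -/
def StateS3 (s s' : SSState α) : Prop :=
  s.tracked ≠ s'.tracked ∧
  ∃ z z' : α,
    s.tracked \ s'.tracked = {z} ∧ s'.tracked \ s.tracked = {z'} ∧
    (∃ y ∈ s.tracked ∩ s'.tracked, s.count y = s'.count y + 1 ∧
      ∀ a ∈ s.tracked ∩ s'.tracked, a ≠ y → s.count a = s'.count a) ∧
    s.count z = s'.count z' ∧
    (∀ a ∈ s.tracked, s.count z ≤ s.count a) ∧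
    (∀ a ∈ s'.tracked, s'.count z' ≤ s'.count a)

/-- State (S4): (a) `T ≠ T'` with `T \ T' = {z₁, z₂}` and `T' \ T = {z₁', z₂'}`;
(b) counters agree on `T ∩ T'`;
(c) `C[z₁] − 1 = C[z₂] = C'[z₁'] = C'[z₂'] = min_{a∈T} C[a] = min_{a∈T'} C'[a]`;
(d) among the minimum-count items of `T'`, the one with largest recency (the
eviction victim of the primed run) belongs to `W' = T' \ T`. -/
def StateS4 (s s' : SSState α) : Prop :=
  s.tracked ≠ s'.tracked ∧
  ∃ z₁ z₂ z₁' z₂' : α, z₁ ≠ z₂ ∧ z₁' ≠ z₂' ∧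
    s.tracked \ s'.tracked = {z₁, z₂} ∧ s'.tracked \ s.tracked = {z₁', z₂'} ∧
    (∀ a ∈ s.tracked ∩ s'.tracked, s.count a = s'.count a) ∧
    s.count z₁ = s.count z₂ + 1 ∧
    s.count z₂ = s'.count z₁' ∧ s'.count z₁' = s'.count z₂' ∧
    (∀ a ∈ s.tracked, s.count z₂ ≤ s.count a) ∧
    (∀ a ∈ s'.tracked, s'.count z₁' ≤ s'.count a) ∧
    (∃ w, ssEvict s' = some w ∧ w ∈ s'.tracked \ s.tracked)

end NeighborStates

variable {α : Type} [LinearOrder α]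

/-- The SpaceSaving state after processing the first `t` positions of the
stream `X` (capacity `k`, positions 1-indexed). -/
def ssNbState (k : ℕ) (X : List α) (t : ℕ) : SSState α :=
  ssRun k ((X.map some).take t)

/-- The SpaceSaving state after processing the first `t` positions of the
neighboring stream `X′`, which is `X` with the single update at (1-indexed)
position `i` removed, i.e. replaced by an empty update contributing nothing. -/
def ssNbState' (k : ℕ) (X : List α) (i t : ℕ) : SSState α :=
  ssRun k (((X.map some).set (i - 1) none).take t)

/-!
The invariant carried along the two runs is the conclusion itself: items tracked in both states
with equal counters have equal recencies. The removed update creates no violation, since an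
already tracked item has its counter raised by one in the full run only. A later common update `x`
preserves the invariant: its own recency becomes the current time in both runs, while any other
item still tracked was tracked before, with the same counter and recency. In particular it does
not matter which items the two runs evict.
-/

namespace SSState

variable {α : Type} {s s' : SSState α}

/-- Items tracked in both states with equal counters have equal recencies. Started from identical
states, this relation survives both the removal of one update and every later common update. -/
def RecencyEqOfCountEq (s s' : SSState α) : Prop :=
  ∀ a, a ∈ s.tracked → a ∈ s'.tracked → s.count a = s'.count a → s.recency a = s'.recency a

theorem RecencyEqOfCountEq.refl (s : SSState α) : RecencyEqOfCountEq s s :=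
  fun _ _ _ _ => rfl

variable [LinearOrder α] {k t : ℕ} {a x : α}

theorem recency_ssStep_self (hx : x ∈ (ssStep k t s (some x)).tracked) :
    (ssStep k t s (some x)).recency x = t := by
  simp only [ssStep] at hx ⊢
  split_ifs at hx ⊢ with hmem
  · exact Function.update_self ..
  · exact Function.update_self ..
  · cases h : ssEvict s with
    | none => exact absurd (by simpa only [h] using hx) hmem
    | some y => exact Function.update_self ..

theorem mem_tracked_of_mem_ssStep (hax : a ≠ x) (ha : a ∈ (ssStep k t s (some x)).tracked) :
    a ∈ s.tracked := by
  simp only [ssStep] at ha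
  split_ifs at ha
  · exact ha
  · exact Finset.mem_of_mem_insert_of_ne ha hax
  · cases h : ssEvict s with
    | none => simpa only [h] using ha
    | some y =>
      rw [h] at ha
      exact Finset.mem_of_mem_erase (Finset.mem_of_mem_insert_of_ne ha hax)

theorem count_ssStep_of_ne (hax : a ≠ x) (ha : a ∈ (ssStep k t s (some x)).tracked) :
    (ssStep k t s (some x)).count a = s.count a := by
  simp only [ssStep] at ha ⊢
  split_ifs at ha ⊢
  · exact Function.update_of_ne hax ..
  · exact Function.update_of_ne hax ..
  · cases h : ssEvict s with
    | none => rfl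
    | some y =>
      rw [h] at ha
      have hay : a ≠ y := Finset.ne_of_mem_erase (Finset.mem_of_mem_insert_of_ne ha hax)
      exact (Function.update_of_ne hax ..).trans (Function.update_of_ne hay ..)

theorem recency_ssStep_of_ne (hax : a ≠ x) :
    (ssStep k t s (some x)).recency a = s.recency a := by
  simp only [ssStep]
  split_ifs
  · exact Function.update_of_ne hax ..
  · exact Function.update_of_ne hax ..
  · cases ssEvict s with
    | none => rfl
    | some y => exact Function.update_of_ne hax ..

theorem count_ssStep_self_of_mem (hx : x ∈ s.tracked) :
    (ssStep k t s (some x)).count x = s.count x + 1 := by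
  simp only [ssStep, if_pos hx, Function.update_self]

theorem recencyEqOfCountEq_ssStep_left (k t : ℕ) (s : SSState α) (u : Option α) :
    RecencyEqOfCountEq (ssStep k t s u) s := by
  cases u with
  | none => exact .refl s
  | some x =>
    intro a _ ha' hcount
    obtain rfl | hax := eq_or_ne a x
    · rw [count_ssStep_self_of_mem ha'] at hcount
      exact absurd hcount (Nat.succ_ne_self _)
    · exact recency_ssStep_of_ne hax

theorem RecencyEqOfCountEq.ssStep (h : RecencyEqOfCountEq s s') (k t : ℕ) (u : Option α) :
    RecencyEqOfCountEq (ssStep k t s u) (ssStep k t s' u) := by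
  cases u with
  | none => exact h
  | some x =>
    intro a ha ha' hcount
    obtain rfl | hax := eq_or_ne a x
    · rw [recency_ssStep_self ha, recency_ssStep_self ha']
    · rw [count_ssStep_of_ne hax ha, count_ssStep_of_ne hax ha'] at hcount
      rw [recency_ssStep_of_ne hax, recency_ssStep_of_ne hax]
      exact h a (mem_tracked_of_mem_ssStep hax ha) (mem_tracked_of_mem_ssStep hax ha') hcount

theorem RecencyEqOfCountEq.ssRunAux (h : RecencyEqOfCountEq s s') (k t : ℕ)
    (X : List (Option α)) :
    RecencyEqOfCountEq (ssRunAux k s t X) (ssRunAux k s' t X) := by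
  induction X generalizing s s' t with
  | nil => exact h
  | cons u _ ih => exact ih (h.ssStep k t u) (t + 1)

end SSState

theorem ss_neighbor_recency_general {α : Type} [LinearOrder α] (k : ℕ) (s : SSState α) (t : ℕ)
    (X : List (Option α)) (j : ℕ) :
    SSState.RecencyEqOfCountEq (ssRunAux k s t X) (ssRunAux k s t (X.set j none)) := by
  induction X generalizing s t j with
  | nil => exact .refl _
  | cons u X ih =>
    cases j with
    | zero => exact (SSState.recencyEqOfCountEq_ssStep_left k t s u).ssRunAux k (t + 1) X
    | succ j => exact ih (ssStep k t s u) (t + 1) j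

/-- **Agreement of recencies from agreement of counters.**  For the parallel
runs of SpaceSaving on neighboring streams, for every time `t ≥ i` and every
item `a` tracked in both runs, if the counters agree then the recencies agree
as well. -/
theorem ss_neighbor_recency {α : Type} [LinearOrder α] (k : ℕ) (hk : 1 ≤ k)
    (X : List α) (i : ℕ) (hi1 : 1 ≤ i) (hi2 : i ≤ X.length) :
    ∀ t, i ≤ t → t ≤ X.length →
      ∀ a, a ∈ (ssNbState k X t).tracked → a ∈ (ssNbState' k X i t).tracked →
        (ssNbState k X t).count a = (ssNbState' k X i t).count a →
        (ssNbState k X t).recency a = (ssNbState' k X i t).recency a := by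
  intro t _ _
  rw [ssNbState', List.take_set]
  exact ss_neighbor_recency_general k _ 1 _ (i - 1)
end

section
/- Laplace mechanism for vector-valued functions: let ε > 0, let D be a set of inputs with a symmetric neighboring relation ∼, and let f : D → ℝ^d satisfy ‖f(X) − f(X')‖₁ ≤ 1 for all X ∼ X'. For each input X, let M(X) be the distribution of f(X) + (Z_1, …, Z_d), where Z_1, …, Z_d are independent random variables each with the Laplace distribution of scale 1/ε (i.e., M(X) is the pushforward of the d-fold product of Laplace(1/ε) measures under translation by f(X)). Then for all X ∼ X' and all measurable sets A ⊆ ℝ^d, M(X)(A) ≤ e^ε · M(X')(A); i.e., M is (ε, 0)-differentially private. -/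
open MeasureTheory

/-- The Laplace distribution with scale `b`: the measure on `ℝ` with density
`x ↦ (1 / (2b)) · exp (−|x| / b)` with respect to Lebesgue measure. -/
noncomputable def laplaceMeasure (b : ℝ) : Measure ℝ :=
  volume.withDensity fun x => ENNReal.ofReal ((1 / (2 * b)) * Real.exp (-|x| / b))

/-!
Translating the Laplace density of scale `b` by `x` instead of `y` changes it by a factor of at most
`exp (|x - y| / b)`, by the triangle inequality. In a product of independent coordinates these
factors multiply, so their exponents add up to the `ℓ₁`-distance of the two translations over `b`.
-/

open scoped ENNReal

section Pi

variable {ι : Type*} [Fintype ι] {α : ι → Type*}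

theorem outerMeasure_pi_le_prod_smul_pi {μ ν : ∀ i, OuterMeasure (α i)} {c : ι → ℝ≥0∞}
    (hc : ∀ i, c i ≠ ∞) (h : ∀ i, μ i ≤ c i • ν i) :
    OuterMeasure.pi μ ≤ (∏ i, c i) • OuterMeasure.pi ν := by
  simp only [OuterMeasure.pi]
  rw [OuterMeasure.smul_boundedBy (ENNReal.prod_ne_top fun i _ => hc i),
    OuterMeasure.le_boundedBy]
  intro s
  calc OuterMeasure.boundedBy (piPremeasure μ) s
      ≤ ∏ i, μ i (Function.eval i '' s) := OuterMeasure.boundedBy_le s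
    _ ≤ ∏ i, c i * ν i (Function.eval i '' s) := Finset.prod_le_prod' fun i _ => h i _
    _ = (∏ i, c i) * ∏ i, ν i (Function.eval i '' s) := Finset.prod_mul_distrib

variable [∀ i, MeasurableSpace (α i)]

theorem measure_pi_le_prod_smul_pi {μ ν : ∀ i, Measure (α i)} {c : ι → ℝ≥0∞}
    (hc : ∀ i, c i ≠ ∞) (h : ∀ i, μ i ≤ c i • ν i) :
    Measure.pi μ ≤ (∏ i, c i) • Measure.pi ν := by
  refine Measure.le_iff.2 fun s hs => ?_
  rw [Measure.smul_apply, Measure.pi, Measure.pi, toMeasure_apply _ _ hs, toMeasure_apply _ _ hs]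
  exact outerMeasure_pi_le_prod_smul_pi hc (fun i => Measure.toOuterMeasure_le.2 (h i)) s

theorem map_add_left_pi [∀ i, AddGroup (α i)] [∀ i, MeasurableAdd (α i)]
    (μ : ∀ i, Measure (α i)) [∀ i, SigmaFinite (μ i)] (a : ∀ i, α i) :
    (Measure.pi μ).map (a + ·) = Measure.pi fun i => (μ i).map (a i + ·) := by
  have (i : ι) : SigmaFinite ((μ i).map (a i + ·)) :=
    (MeasurableEquiv.addLeft (a i)).sigmaFinite_map
  exact Measure.pi_map_pi (f := fun i x => a i + x)
    fun i => (measurable_const_add (a i)).aemeasurable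

end Pi

theorem map_add_left_withDensity {G : Type*} [AddGroup G] [MeasurableSpace G] [MeasurableAdd G]
    (μ : Measure G) [μ.IsAddLeftInvariant] (g : G → ℝ≥0∞) (a : G) :
    (μ.withDensity g).map (a + ·) = μ.withDensity fun x => g (-a + x) := by
  ext s hs
  have hs' : MeasurableSet ((a + ·) ⁻¹' s) := measurable_const_add a hs
  calc (μ.withDensity g).map (a + ·) s
      = ∫⁻ x in (a + ·) ⁻¹' s, g x ∂μ := by
        rw [Measure.map_apply (measurable_const_add a) hs, withDensity_apply _ hs']
    _ = ∫⁻ x in (a + ·) ⁻¹' s, g (-a + (a + x)) ∂μ := by simp only [neg_add_cancel_left]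
    _ = ∫⁻ x in s, g (-a + x) ∂μ :=
        (measurePreserving_add_left μ a).setLIntegral_comp_preimage_emb
          (measurableEmbedding_addLeft a) (fun x => g (-a + x)) s
    _ = μ.withDensity (fun x => g (-a + x)) s := (withDensity_apply _ hs).symm

theorem exp_neg_abs_sub_div_le {b : ℝ} (hb : 0 ≤ b) (x y z : ℝ) :
    Real.exp (-|z - x| / b) ≤ Real.exp (|x - y| / b) * Real.exp (-|z - y| / b) := by
  rw [← Real.exp_add, ← add_div]
  gcongr
  linarith [abs_sub_le z x y]

instance sigmaFinite_laplaceMeasure (b : ℝ) : SigmaFinite (laplaceMeasure b) :=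
  SigmaFinite.withDensity_ofReal _

theorem map_add_left_laplaceMeasure (b x : ℝ) :
    (laplaceMeasure b).map (x + ·) = volume.withDensity fun z =>
      ENNReal.ofReal ((1 / (2 * b)) * Real.exp (-|z - x| / b)) := by
  simp only [laplaceMeasure, map_add_left_withDensity, neg_add_eq_sub]

theorem map_add_left_laplaceMeasure_le {b : ℝ} (hb : 0 < b) (x y : ℝ) :
    (laplaceMeasure b).map (x + ·) ≤
      ENNReal.ofReal (Real.exp (|x - y| / b)) • (laplaceMeasure b).map (y + ·) := by
  rw [map_add_left_laplaceMeasure, map_add_left_laplaceMeasure,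
    ← withDensity_smul' _ _ ENNReal.ofReal_ne_top]
  refine withDensity_mono (.of_forall fun z => ?_)
  rw [Pi.smul_apply, smul_eq_mul, ← ENNReal.ofReal_mul (Real.exp_nonneg _), mul_left_comm]
  exact ENNReal.ofReal_le_ofReal <|
    mul_le_mul_of_nonneg_left (exp_neg_abs_sub_div_le hb.le x y z) (by positivity)

theorem map_add_left_pi_laplaceMeasure_le {ι : Type*} [Fintype ι] {b : ℝ} (hb : 0 < b)
    (x y : ι → ℝ) :
    (Measure.pi fun _ => laplaceMeasure b).map (x + ·) ≤
      ENNReal.ofReal (Real.exp ((∑ i, |x i - y i|) / b)) •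
        (Measure.pi fun _ => laplaceMeasure b).map (y + ·) := by
  rw [map_add_left_pi, map_add_left_pi, Finset.sum_div, Real.exp_sum,
    ENNReal.ofReal_prod_of_nonneg fun i _ => Real.exp_nonneg _]
  exact measure_pi_le_prod_smul_pi (fun _ => ENNReal.ofReal_ne_top)
    fun i => map_add_left_laplaceMeasure_le hb (x i) (y i)

theorem laplace_mechanism_dp_general {D ι : Type*} [Fintype ι] {b Δ : ℝ} (hb : 0 < b)
    {neighbor : D → D → Prop} {f : D → ι → ℝ}
    (hsens : ∀ X X', neighbor X X' → ∑ i, |f X i - f X' i| ≤ Δ)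
    {X X' : D} (hX : neighbor X X') :
    (Measure.pi fun _ => laplaceMeasure b).map (f X + ·) ≤
      ENNReal.ofReal (Real.exp (Δ / b)) •
        (Measure.pi fun _ => laplaceMeasure b).map (f X' + ·) := by
  refine (map_add_left_pi_laplaceMeasure_le hb (f X) (f X')).trans ?_
  gcongr
  exact hsens X X' hX

/-- **Laplace mechanism for vector-valued functions.**  Let `ε > 0`, let `D` be
a set of inputs with a symmetric neighboring relation, and let `f : D → ℝ^d`
have `ℓ₁`-sensitivity at most `1` on neighboring inputs.  Let `M X` be the
distribution of `f X + (Z₁, …, Z_d)` with `Zᵢ` i.i.d. `Laplace (1/ε)` (the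
pushforward of the product of Laplace measures under translation by `f X`).
Then for all neighbors `X ∼ X'` and all measurable `A ⊆ ℝ^d`,
`M X A ≤ e^ε · M X' A`; i.e. `M` is `(ε, 0)`-differentially private. -/
theorem laplace_mechanism_dp {D : Type} (ε : ℝ) (hε : 0 < ε) (d : ℕ)
    (neighbor : D → D → Prop) (hsymm : ∀ X X', neighbor X X' → neighbor X' X)
    (f : D → (Fin d → ℝ))
    (hsens : ∀ X X', neighbor X X' → (∑ i, |f X i - f X' i|) ≤ 1) :
    ∀ X X', neighbor X X' → ∀ A : Set (Fin d → ℝ), MeasurableSet A →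
      Measure.map (fun z => f X + z)
          (Measure.pi fun _ : Fin d => laplaceMeasure (1 / ε)) A ≤
        ENNReal.ofReal (Real.exp ε) *
          Measure.map (fun z => f X' + z)
            (Measure.pi fun _ : Fin d => laplaceMeasure (1 / ε)) A := by
  intro X X' hX A _
  simpa using laplace_mechanism_dp_general (one_div_pos.2 hε) hsens hX A
end

section
/- Accuracy of differentially private SpaceSaving: run SpaceSaving with capacity k̃ = 2k on a stream X, and add to each terminal counter C[x] independent noise η_x with the Laplace distribution of scale 1/ε. Then for any tracked item x with true frequency f_x, with probability at least 1 − δ, f_x − (1/ε)·ln(1/δ) ≤ C[x] + η_x ≤ f_x + |X|/(2k) + (1/ε)·ln(1/δ). -/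
variable {α : Type} [LinearOrder α]

open MeasureTheory

/-!
Assign to every item an estimate: its counter if it is tracked, and otherwise the least tracked
counter (or `0` while there is room left). In each of the three branches of the algorithm the
arriving item ends up with the counter "old estimate plus one", and no estimate ever decreases,
so estimates dominate true frequencies. The counters always sum to the number `n` of arrivals, so
the least of `K` counters is at most `n / K`. This is the only excess that an item can inherit when
it enters the tracked set, so an estimate exceeds the true frequency by at most `n / K`. The Laplace
noise of scale `b` lies in `[-b log (1/δ), b log (1/δ)]` with probability exactly `1 - δ`.
-/

section Estimate

variable {K : ℕ} {s : SSState α} {a : α}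

/-- The counter value inherited by an item entering the tracked set of a SpaceSaving state of
capacity `K`: zero if there is room left, the minimum counter otherwise. (On the empty set of
counters `sInf` is `0`.) -/
noncomputable def ssFloor (K : ℕ) (s : SSState α) : ℕ :=
  if s.tracked.card < K then 0 else sInf (s.count '' s.tracked)

/-- The SpaceSaving frequency estimate of an arbitrary item, tracked or not. -/
noncomputable def ssEstimate (K : ℕ) (s : SSState α) (a : α) : ℕ :=
  if a ∈ s.tracked then s.count a else ssFloor K s

omit [LinearOrder α] in
lemma ssFloor_of_card_lt (h : s.tracked.card < K) : ssFloor K s = 0 :=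
  if_pos h

omit [LinearOrder α] in
lemma ssFloor_le_count (ha : a ∈ s.tracked) : ssFloor K s ≤ s.count a := by
  unfold ssFloor
  split_ifs
  · exact Nat.zero_le _
  · exact Nat.sInf_le (Set.mem_image_of_mem _ ha)

omit [LinearOrder α] in
lemma le_ssFloor {m : ℕ} (hfull : K ≤ s.tracked.card) (hs : s.tracked.Nonempty)
    (hm : ∀ b ∈ s.tracked, m ≤ s.count b) : m ≤ ssFloor K s := by
  rw [ssFloor, if_neg hfull.not_gt]
  exact le_csInf (hs.to_set.image _) (Set.forall_mem_image.2 hm)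

omit [LinearOrder α] in
lemma mul_ssFloor_le_sum_count (K : ℕ) (s : SSState α) :
    K * ssFloor K s ≤ ∑ b ∈ s.tracked, s.count b := by
  rcases lt_or_ge s.tracked.card K with hroom | hfull
  · simp [ssFloor_of_card_lt hroom]
  · calc K * ssFloor K s ≤ s.tracked.card * ssFloor K s := Nat.mul_le_mul_right _ hfull
      _ ≤ ∑ b ∈ s.tracked, s.count b :=
        Finset.card_nsmul_le_sum _ _ _ fun _ hb => ssFloor_le_count hb

lemma ssEstimate_of_mem (ha : a ∈ s.tracked) : ssEstimate K s a = s.count a :=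
  if_pos ha

lemma ssEstimate_of_notMem (ha : a ∉ s.tracked) : ssEstimate K s a = ssFloor K s :=
  if_neg ha

lemma ssFloor_le_ssEstimate (K : ℕ) (s : SSState α) (a : α) : ssFloor K s ≤ ssEstimate K s a := by
  by_cases ha : a ∈ s.tracked
  · exact (ssFloor_le_count ha).trans_eq (ssEstimate_of_mem ha).symm
  · exact (ssEstimate_of_notMem ha).ge

end Estimate

section Step

variable {K t : ℕ} {s : SSState α} {a x : α}

lemma exists_ssEvict_eq_some (hs : s.tracked.Nonempty) :
    ∃ y ∈ s.tracked, ssEvict s = some y ∧ ∀ b ∈ s.tracked, s.count y ≤ s.count b := by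
  obtain ⟨m, hm, hmin⟩ := s.tracked.exists_min_image s.count hs
  obtain ⟨r, hr, hrecent⟩ :=
    (ssMinSet s).exists_max_image s.recency ⟨m, Finset.mem_filter.2 ⟨hm, hmin⟩⟩
  have hcandidates : ((ssMinSet s).filter
      (fun a => ∀ b ∈ ssMinSet s, s.recency b ≤ s.recency a)).Nonempty :=
    ⟨r, Finset.mem_filter.2 ⟨hr, hrecent⟩⟩
  have hvictim := Finset.mem_filter.1 (Finset.mem_filter.1 (Finset.max'_mem _ hcandidates)).1
  exact ⟨_, hvictim.1, dif_pos hcandidates, hvictim.2⟩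

lemma ssStep_of_mem (hx : x ∈ s.tracked) :
    ssStep K t s (some x) = ⟨s.tracked, Function.update s.count x (s.count x + 1),
      Function.update s.recency x t⟩ := by
  simp only [ssStep, if_pos hx]

lemma ssStep_of_card_lt (hx : x ∉ s.tracked) (hroom : s.tracked.card < K) :
    ssStep K t s (some x) = ⟨insert x s.tracked, Function.update s.count x 1,
      Function.update s.recency x t⟩ := by
  simp only [ssStep, if_neg hx, if_pos hroom]

lemma exists_ssStep_eq_of_le_card (hK : 0 < K) (hx : x ∉ s.tracked) (hfull : K ≤ s.tracked.card) :
    ∃ y ∈ s.tracked, s.count y = ssFloor K s ∧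
      ssStep K t s (some x) = ⟨insert x (s.tracked.erase y),
        Function.update (Function.update s.count y 0) x (s.count y + 1),
        Function.update s.recency x t⟩ := by
  have hs : s.tracked.Nonempty := Finset.card_pos.1 (hK.trans_le hfull)
  obtain ⟨y, hy, hevict, hmin⟩ := exists_ssEvict_eq_some hs
  refine ⟨y, hy, (le_ssFloor hfull hs hmin).antisymm (ssFloor_le_count hy), ?_⟩
  simp only [ssStep, if_neg hx, if_neg hfull.not_gt, hevict]

lemma mem_tracked_ssStep_self (hK : 0 < K) : x ∈ (ssStep K t s (some x)).tracked := by
  by_cases hx : x ∈ s.tracked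
  · rwa [ssStep_of_mem hx]
  rcases lt_or_ge s.tracked.card K with hroom | hfull
  · rw [ssStep_of_card_lt hx hroom]
    exact Finset.mem_insert_self _ _
  · obtain ⟨y, -, -, hstep⟩ := exists_ssStep_eq_of_le_card (t := t) hK hx hfull
    rw [hstep]
    exact Finset.mem_insert_self _ _

lemma count_ssStep_self (hK : 0 < K) :
    (ssStep K t s (some x)).count x = ssEstimate K s x + 1 := by
  by_cases hx : x ∈ s.tracked
  · simp [ssStep_of_mem hx, ssEstimate_of_mem hx]
  rw [ssEstimate_of_notMem hx]
  rcases lt_or_ge s.tracked.card K with hroom | hfull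
  · simp [ssStep_of_card_lt hx hroom, ssFloor_of_card_lt hroom]
  · obtain ⟨y, -, hcount, hstep⟩ := exists_ssStep_eq_of_le_card (t := t) hK hx hfull
    simp [hstep, hcount]

lemma mem_tracked_and_count_ssStep_of_ne (hK : 0 < K) (hax : a ≠ x)
    (ha : a ∈ (ssStep K t s (some x)).tracked) :
    a ∈ s.tracked ∧ (ssStep K t s (some x)).count a = s.count a := by
  by_cases hx : x ∈ s.tracked
  · simp_all [ssStep_of_mem hx]
  rcases lt_or_ge s.tracked.card K with hroom | hfull
  · simp_all [ssStep_of_card_lt hx hroom]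
  · obtain ⟨y, -, -, hstep⟩ := exists_ssStep_eq_of_le_card (t := t) hK hx hfull
    simp_all

lemma count_eq_ssFloor_of_notMem_ssStep (hK : 0 < K) (ha : a ∈ s.tracked)
    (ha' : a ∉ (ssStep K t s (some x)).tracked) : s.count a = ssFloor K s := by
  by_cases hx : x ∈ s.tracked
  · simp_all [ssStep_of_mem hx]
  rcases lt_or_ge s.tracked.card K with hroom | hfull
  · simp_all [ssStep_of_card_lt hx hroom]
  · obtain ⟨y, -, hcount, hstep⟩ := exists_ssStep_eq_of_le_card (t := t) hK hx hfull
    have hay : a = y := by simp_all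
    rwa [hay]

lemma card_tracked_le_ssStep (hK : 0 < K) :
    s.tracked.card ≤ (ssStep K t s (some x)).tracked.card := by
  by_cases hx : x ∈ s.tracked
  · rw [ssStep_of_mem hx]
  rcases lt_or_ge s.tracked.card K with hroom | hfull
  · rw [ssStep_of_card_lt hx hroom]
    exact Finset.card_le_card (Finset.subset_insert _ _)
  · obtain ⟨y, hy, -, hstep⟩ := exists_ssStep_eq_of_le_card (t := t) hK hx hfull
    have hx' : x ∉ s.tracked.erase y := fun h => hx (Finset.mem_of_mem_erase h)
    rw [hstep, Finset.card_insert_of_notMem hx', Finset.card_erase_add_one hy]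

lemma sum_count_ssStep (hK : 0 < K) :
    ∑ b ∈ (ssStep K t s (some x)).tracked, (ssStep K t s (some x)).count b =
      ∑ b ∈ s.tracked, s.count b + 1 := by
  by_cases hx : x ∈ s.tracked
  · rw [ssStep_of_mem hx, Finset.sum_update_of_mem hx, ← Finset.add_sum_erase _ _ hx,
      Finset.sdiff_singleton_eq_erase]
    ring
  rcases lt_or_ge s.tracked.card K with hroom | hfull
  · rw [ssStep_of_card_lt hx hroom, Finset.sum_insert hx, Finset.sum_update_of_notMem hx,
      add_comm, add_right_inj]
    exact Function.update_self ..
  · obtain ⟨y, hy, -, hstep⟩ := exists_ssStep_eq_of_le_card (t := t) hK hx hfull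
    have hx' : x ∉ s.tracked.erase y := fun h => hx (Finset.mem_of_mem_erase h)
    rw [hstep, Finset.sum_insert hx', Finset.sum_update_of_notMem hx',
      Finset.sum_update_of_notMem (Finset.notMem_erase y _), ← Finset.add_sum_erase _ _ hy]
    simp only [Function.update_self]
    ring

lemma ssFloor_le_ssStep (hK : 0 < K) : ssFloor K s ≤ ssFloor K (ssStep K t s (some x)) := by
  rcases lt_or_ge s.tracked.card K with hroom | hfull
  · simp [ssFloor_of_card_lt hroom]
  refine le_ssFloor (hfull.trans (card_tracked_le_ssStep hK)) ⟨x, mem_tracked_ssStep_self hK⟩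
    fun b hb => ?_
  rcases eq_or_ne b x with rfl | hbx
  · rw [count_ssStep_self hK]
    exact (ssFloor_le_ssEstimate K s b).trans (Nat.le_succ _)
  · obtain ⟨hb', hcount⟩ := mem_tracked_and_count_ssStep_of_ne hK hbx hb
    exact (ssFloor_le_count hb').trans_eq hcount.symm

lemma ssEstimate_ssStep_self (hK : 0 < K) :
    ssEstimate K (ssStep K t s (some x)) x = ssEstimate K s x + 1 := by
  rw [ssEstimate_of_mem (mem_tracked_ssStep_self hK), count_ssStep_self hK]

lemma ssEstimate_le_ssStep_of_ne (hK : 0 < K) (hax : a ≠ x) :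
    ssEstimate K s a ≤ ssEstimate K (ssStep K t s (some x)) a := by
  by_cases ha' : a ∈ (ssStep K t s (some x)).tracked
  · obtain ⟨ha, hcount⟩ := mem_tracked_and_count_ssStep_of_ne hK hax ha'
    rw [ssEstimate_of_mem ha, ssEstimate_of_mem ha', hcount]
  · have hfloor : ssEstimate K s a = ssFloor K s := by
      by_cases ha : a ∈ s.tracked
      · rw [ssEstimate_of_mem ha, count_eq_ssFloor_of_notMem_ssStep hK ha ha']
      · exact ssEstimate_of_notMem ha
    rw [hfloor, ssEstimate_of_notMem ha']
    exact ssFloor_le_ssStep hK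

end Step

section Run

variable {K : ℕ}

lemma ssRunAux_concat (K : ℕ) (s : SSState α) (t : ℕ) (X : List (Option α)) (o : Option α) :
    ssRunAux K s t (X ++ [o]) = ssStep K (t + X.length) (ssRunAux K s t X) o := by
  induction X generalizing s t with
  | nil => rfl
  | cons p X ih =>
    simp only [List.cons_append, ssRunAux, ih, List.length_cons]
    congr 1
    omega

lemma ssRun_concat (K : ℕ) (X : List (Option α)) (o : Option α) :
    ssRun K (X ++ [o]) = ssStep K (1 + X.length) (ssRun K X) o :=
  ssRunAux_concat K _ 1 X o

lemma sum_count_ssRun (hK : 0 < K) (X : List (Option α)) :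
    ∑ b ∈ (ssRun K X).tracked, (ssRun K X).count b = X.reduceOption.length := by
  induction X using List.reverseRecOn with
  | nil => rfl
  | append_singleton X o ih =>
    rw [ssRun_concat, List.reduceOption_append]
    cases o with
    | none => simpa [ssStep] using ih
    | some x => simp [sum_count_ssStep hK, ih]

lemma mul_ssFloor_ssRun_le (hK : 0 < K) (X : List (Option α)) :
    K * ssFloor K (ssRun K X) ≤ X.reduceOption.length :=
  (mul_ssFloor_le_sum_count K _).trans_eq (sum_count_ssRun hK X)

theorem count_le_ssEstimate_ssRun (hK : 0 < K) (X : List (Option α)) (a : α) :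
    X.reduceOption.count a ≤ ssEstimate K (ssRun K X) a := by
  induction X using List.reverseRecOn with
  | nil => exact Nat.zero_le _
  | append_singleton X o ih =>
    rw [ssRun_concat, List.reduceOption_append]
    cases o with
    | none => simpa [ssStep] using ih
    | some x =>
      rcases eq_or_ne a x with rfl | hax
      · simpa [ssEstimate_ssStep_self hK] using ih
      · simpa [hax.symm] using ih.trans (ssEstimate_le_ssStep_of_ne hK hax)

theorem mul_ssEstimate_ssRun_le (hK : 0 < K) (X : List (Option α)) (a : α) :
    K * ssEstimate K (ssRun K X) a ≤ K * X.reduceOption.count a + X.reduceOption.length := by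
  induction X using List.reverseRecOn with
  | nil =>
    rw [ssEstimate_of_notMem (Finset.notMem_empty a)]
    exact (mul_ssFloor_ssRun_le hK []).trans (Nat.le_add_left _ _)
  | append_singleton X o ih =>
    obtain ha | ha := em' (a ∈ (ssRun K (X ++ [o])).tracked)
    · rw [ssEstimate_of_notMem ha]
      exact (mul_ssFloor_ssRun_le hK _).trans (Nat.le_add_left _ _)
    rw [ssRun_concat] at ha ⊢
    rw [List.reduceOption_append]
    cases o with
    | none => simpa [ssStep] using ih
    | some x =>
      rcases eq_or_ne a x with rfl | hax
      · rw [ssEstimate_ssStep_self hK]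
        simp only [List.reduceOption_singleton, Option.toList_some, List.count_append,
          List.count_singleton_self, List.length_append, List.length_singleton]
        linarith
      · obtain ⟨ha', hcount⟩ := mem_tracked_and_count_ssStep_of_ne hK hax ha
        rw [ssEstimate_of_mem ha'] at ih
        rw [ssEstimate_of_mem ha, hcount]
        simpa [hax.symm, ← add_assoc] using ih.trans (Nat.le_succ _)

lemma ssEstimate_ssRun_le (hK : 0 < K) (X : List (Option α)) (a : α) :
    (ssEstimate K (ssRun K X) a : ℝ) ≤
      X.reduceOption.count a + (X.reduceOption.length : ℝ) / K := by
  have hmul : (K : ℝ) * ssEstimate K (ssRun K X) a ≤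
      K * X.reduceOption.count a + X.reduceOption.length :=
    mod_cast mul_ssEstimate_ssRun_le hK X a
  have hK' : (0 : ℝ) < K := Nat.cast_pos.2 hK
  rw [← sub_le_iff_le_add', le_div_iff₀ hK']
  linarith

end Run

section Laplace

variable {b t δ : ℝ}

lemma integral_comp_abs_neg_self {E : Type*} [NormedAddCommGroup E] [NormedSpace ℝ E] {f : ℝ → E}
    (ht : 0 ≤ t) (hf : IntervalIntegrable f volume 0 t) :
    ∫ x in -t..t, f |x| = (2 : ℝ) • ∫ x in 0..t, f x := by
  have hright : Set.EqOn f (fun x => f |x|) (Set.uIcc 0 t) := fun x hx => by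
    rw [Set.uIcc_of_le ht] at hx
    exact congrArg f (abs_of_nonneg hx.1).symm
  have hfright : IntervalIntegrable (fun x => f |x|) volume 0 t :=
    hf.congr (hright.mono Set.uIoc_subset_uIcc)
  have hfleft : IntervalIntegrable (fun x => f |x|) volume (-t) 0 := by
    simpa using hfright.comp_sub_left 0 |>.symm
  have hleft : ∫ x in -t..0, f |x| = ∫ x in 0..t, f |x| := by
    simpa using (intervalIntegral.integral_comp_neg (a := 0) (b := t) fun x => f |x|).symm
  rw [← intervalIntegral.integral_add_adjacent_intervals hfleft hfright, hleft,
    ← intervalIntegral.integral_congr hright, two_smul]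

lemma integral_exp_neg_div (hb : b ≠ 0) (t : ℝ) :
    ∫ x in 0..t, Real.exp (-x / b) = b * (1 - Real.exp (-t / b)) := by
  have h := intervalIntegral.integral_comp_div (a := 0) (b := t) Real.exp (neg_ne_zero.2 hb)
  simp only [div_neg, ← neg_div] at h
  rw [h, integral_exp, neg_zero, zero_div, Real.exp_zero, smul_eq_mul]
  ring

lemma integral_laplace_density (hb : b ≠ 0) (ht : 0 ≤ t) :
    ∫ x in -t..t, 1 / (2 * b) * Real.exp (-|x| / b) = 1 - Real.exp (-t / b) := by
  have hcont : Continuous fun x : ℝ => Real.exp (-x / b) := by fun_prop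
  calc ∫ x in -t..t, 1 / (2 * b) * Real.exp (-|x| / b)
      = 1 / (2 * b) * ((2 : ℝ) • ∫ x in 0..t, Real.exp (-x / b)) := by
        rw [intervalIntegral.integral_const_mul,
          integral_comp_abs_neg_self ht (hcont.intervalIntegrable _ _)]
    _ = 1 - Real.exp (-t / b) := by
        rw [integral_exp_neg_div hb, smul_eq_mul]
        field_simp

theorem laplaceMeasure_Icc (hb : 0 < b) (ht : 0 ≤ t) :
    laplaceMeasure b (Set.Icc (-t) t) = ENNReal.ofReal (1 - Real.exp (-t / b)) := by
  have hcont : Continuous fun x : ℝ => 1 / (2 * b) * Real.exp (-|x| / b) := by fun_prop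
  rw [laplaceMeasure, withDensity_apply _ measurableSet_Icc,
    ← ofReal_integral_eq_lintegral_ofReal hcont.integrableOn_Icc
      (Filter.Eventually.of_forall fun x => by positivity),
    integral_Icc_eq_integral_Ioc, ← intervalIntegral.integral_of_le (by linarith),
    integral_laplace_density hb.ne' ht]

lemma laplaceMeasure_Icc_log (hb : 0 < b) (hδ0 : 0 < δ) (hδ1 : δ ≤ 1) :
    laplaceMeasure b (Set.Icc (-(b * Real.log (1 / δ))) (b * Real.log (1 / δ))) =
      ENNReal.ofReal (1 - δ) := by
  have hlog : 0 ≤ b * Real.log (1 / δ) :=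
    mul_nonneg hb.le (Real.log_nonneg ((one_le_div hδ0).2 hδ1))
  rw [laplaceMeasure_Icc hb hlog, neg_div, mul_div_cancel_left₀ _ hb.ne', one_div, Real.log_inv,
    neg_neg, Real.exp_log hδ0]

lemma ofReal_one_sub_le_laplaceMeasure {l c u : ℝ} (hb : 0 < b) (hδ0 : 0 < δ) (hδ1 : δ ≤ 1)
    (hl : l ≤ c) (hu : c ≤ u) :
    ENNReal.ofReal (1 - δ) ≤ laplaceMeasure b
      {z | l - b * Real.log (1 / δ) ≤ c + z ∧ c + z ≤ u + b * Real.log (1 / δ)} := by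
  rw [← laplaceMeasure_Icc_log hb hδ0 hδ1]
  refine measure_mono fun z hz => ⟨?_, ?_⟩
  · linarith [hz.1]
  · linarith [hz.2]

end Laplace

theorem DPSS_accuracy_general {K : ℕ} (hK : 0 < K) {ε δ : ℝ} (hε : 0 < ε) (hδ0 : 0 < δ)
    (hδ1 : δ ≤ 1) (X : List (Option α)) (x : α) :
    ENNReal.ofReal (1 - δ) ≤
      laplaceMeasure (1 / ε)
        {z : ℝ |
          (X.reduceOption.count x : ℝ) - (1 / ε) * Real.log (1 / δ) ≤
              (ssEstimate K (ssRun K X) x : ℝ) + z ∧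
          (ssEstimate K (ssRun K X) x : ℝ) + z ≤
              (X.reduceOption.count x : ℝ) + (X.reduceOption.length : ℝ) / (K : ℝ) +
                (1 / ε) * Real.log (1 / δ)} :=
  ofReal_one_sub_le_laplaceMeasure (one_div_pos.2 hε) hδ0 hδ1
    (mod_cast count_le_ssEstimate_ssRun hK X x) (ssEstimate_ssRun_le hK X x)

/-- **Accuracy of differentially private SpaceSaving.**  Run SpaceSaving with
capacity `k̃ = 2k` on a stream `X` and add independent `Laplace (1/ε)` noise
`η_x` to each terminal counter `C[x]`.  Then for any tracked item `x` with
true frequency `f_x`, with probability at least `1 − δ`,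
`f_x − (1/ε) ln (1/δ) ≤ C[x] + η_x ≤ f_x + |X|/(2k) + (1/ε) ln (1/δ)`. -/
theorem DPSS_accuracy {α : Type} [LinearOrder α] (k : ℕ) (hk : 1 ≤ k)
    (ε δ : ℝ) (hε : 0 < ε) (hδ0 : 0 < δ) (hδ1 : δ < 1) (X : List α) :
    ∀ x ∈ (ssRun (2 * k) (X.map some)).tracked,
      ENNReal.ofReal (1 - δ) ≤
        laplaceMeasure (1 / ε)
          {z : ℝ |
            (X.count x : ℝ) - (1 / ε) * Real.log (1 / δ) ≤
                ((ssRun (2 * k) (X.map some)).count x : ℝ) + z ∧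
            ((ssRun (2 * k) (X.map some)).count x : ℝ) + z ≤
                (X.count x : ℝ) + (X.length : ℝ) / (2 * (k : ℝ)) +
                  (1 / ε) * Real.log (1 / δ)} := by
  intro x hx
  have hlist : (X.map some).reduceOption = X := by simp [List.reduceOption]
  simpa only [ssEstimate_of_mem hx, hlist, Nat.cast_mul, Nat.cast_ofNat] using
    DPSS_accuracy_general (K := 2 * k) (by omega) hε hδ0 hδ1.le (X.map some) x
end
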